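/- arXiv:1007.5494 — 2 statements merged into one kernel-verified Lean document; each statement's English description precedes it below -/
import Mathlib

section
/- Let n ≥ p be positive natural numbers, let Y₁ and Y₂ be real n×p matrices with orthonormal columns (Y₁ᵀY₁ = Iₚ and Y₂ᵀY₂ = Iₚ), and suppose Y₁ᵀY₂ = C where C is a diagonal p×p matrix whose diagonal entries are cos θᵢ with θᵢ ∈ (0, π/2). Let S be the diagonal p×p matrix with entries sin θᵢ and set X = (Y₂ − Y₁C) S⁻¹. For each real t define Y(t) = Y₁·diag(cos(tθᵢ)) + X·diag(sin(tθᵢ)). Then for every real t the matrix Y(t) has orthonormal columns (Y(t)ᵀY(t) = Iₚ), and moreover Y(0) = Y₁ and Y(1) = Y₂. -/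
open Matrix Filter Real

/-- The Grassmann geodesic `Y(t) = Y₁ diag(cos tθᵢ) + X diag(sin tθᵢ)` between Stiefel
matrices `Y₁` and `Y₂` with `Y₁ᵀ Y₂ = diag(cos θᵢ)`, `θᵢ ∈ (0, π/2)`, stays in the
Stiefel manifold and has endpoints `Y(0) = Y₁` and `Y(1) = Y₂`. -/
theorem grassmann_geodesic_stiefel {n p : ℕ} (hp : 0 < p) (hpn : p ≤ n)
    (Y₁ Y₂ : Matrix (Fin n) (Fin p) ℝ)
    (hY₁ : Y₁ᵀ * Y₁ = 1) (hY₂ : Y₂ᵀ * Y₂ = 1)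
    (θ : Fin p → ℝ) (hθ : ∀ i, θ i ∈ Set.Ioo (0 : ℝ) (Real.pi / 2))
    (C : Matrix (Fin p) (Fin p) ℝ) (hC : C = Matrix.diagonal fun i => Real.cos (θ i))
    (hY₁Y₂ : Y₁ᵀ * Y₂ = C)
    (S : Matrix (Fin p) (Fin p) ℝ) (hS : S = Matrix.diagonal fun i => Real.sin (θ i))
    (X : Matrix (Fin n) (Fin p) ℝ) (hX : X = (Y₂ - Y₁ * C) * S⁻¹)
    (Y : ℝ → Matrix (Fin n) (Fin p) ℝ)
    (hY : ∀ t : ℝ, Y t = Y₁ * Matrix.diagonal (fun i => Real.cos (t * θ i)) +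
      X * Matrix.diagonal fun i => Real.sin (t * θ i)) :
    (∀ t : ℝ, (Y t)ᵀ * Y t = 1) ∧ Y 0 = Y₁ ∧ Y 1 = Y₂ := by
  have hpos : ∀ i, Real.sin (θ i) ≠ 0 := fun i =>
    (Real.sin_pos_of_pos_of_lt_pi (hθ i).1 (by linarith [(hθ i).2, (hθ i).1])).ne'
  have hdet : IsUnit S.det := by
    rw [hS, Matrix.det_diagonal]
    exact (Finset.prod_ne_zero_iff.mpr fun i _ => hpos i).isUnit
  have hCT : Cᵀ = C := by rw [hC, Matrix.diagonal_transpose]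
  have hST : Sᵀ = S := by rw [hS, Matrix.diagonal_transpose]
  have hY₂Y₁ : Y₂ᵀ * Y₁ = C := by
    rw [← hCT, ← hY₁Y₂, Matrix.transpose_mul, Matrix.transpose_transpose]
  have hSS : S * S = 1 - C * C := by
    rw [hS, hC, Matrix.diagonal_mul_diagonal, Matrix.diagonal_mul_diagonal,
      ← Matrix.diagonal_one, Matrix.diagonal_sub]
    congr 1
    funext i
    nlinarith [Real.sin_sq_add_cos_sq (θ i)]
  have hXS : X * S = Y₂ - Y₁ * C := by
    rw [hX, Matrix.mul_assoc, Matrix.nonsing_inv_mul _ hdet, Matrix.mul_one]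
  have h1X : Y₁ᵀ * X = 0 := by
    rw [hX, ← Matrix.mul_assoc, Matrix.mul_sub, ← Matrix.mul_assoc, hY₁, hY₁Y₂,
      Matrix.one_mul, sub_self, Matrix.zero_mul]
  have hX1 : Xᵀ * Y₁ = 0 := by
    have := congrArg Matrix.transpose h1X
    simpa [Matrix.transpose_mul] using this
  have hWW : (Y₂ - Y₁ * C)ᵀ * (Y₂ - Y₁ * C) = S * S := by
    have e : C * Y₁ᵀ * (Y₁ * C) = C * C := by
      rw [Matrix.mul_assoc, ← Matrix.mul_assoc Y₁ᵀ, hY₁, Matrix.one_mul]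
    rw [hSS, Matrix.transpose_sub, Matrix.transpose_mul, hCT, Matrix.sub_mul, Matrix.mul_sub,
      Matrix.mul_sub, hY₂, ← Matrix.mul_assoc Y₂ᵀ, hY₂Y₁, e, Matrix.mul_assoc, hY₁Y₂]
    simp
  have hXX : Xᵀ * X = 1 := by
    have e : Xᵀ = S⁻¹ * (Y₂ - Y₁ * C)ᵀ := by
      rw [hX, Matrix.transpose_mul, Matrix.transpose_nonsing_inv, hST]
    rw [e]
    conv_lhs => rw [hX]
    rw [Matrix.mul_assoc, ← Matrix.mul_assoc _ _ S⁻¹, hWW, Matrix.mul_assoc S,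
      Matrix.mul_nonsing_inv _ hdet, Matrix.mul_one, Matrix.nonsing_inv_mul _ hdet]
  refine ⟨fun t => ?_, ?_, ?_⟩
  · have key : ∀ (A B : Matrix (Fin n) (Fin p) ℝ) (D E : Matrix (Fin p) (Fin p) ℝ),
        D * Aᵀ * (B * E) = D * (Aᵀ * B) * E := by
      intro A B D E
      simp only [Matrix.mul_assoc]
    rw [hY, Matrix.transpose_add, Matrix.transpose_mul, Matrix.transpose_mul,
      Matrix.diagonal_transpose, Matrix.diagonal_transpose, Matrix.add_mul, Matrix.mul_add,
      Matrix.mul_add, key, key, key, key, hY₁, h1X, hX1, hXX]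
    simp only [Matrix.mul_one, Matrix.mul_zero, Matrix.zero_mul, add_zero, zero_add,
      Matrix.diagonal_mul_diagonal, Matrix.diagonal_add]
    rw [← Matrix.diagonal_one]
    congr 1
    funext i
    nlinarith [Real.sin_sq_add_cos_sq (t * θ i)]
  · rw [hY]
    simp
  · rw [hY]
    simp only [one_mul]
    rw [← hC, ← hS, hXS]
    abel
end

section
/- Let p be a positive natural number and let M be a real p×p matrix with singular value decomposition M = U·Σ·Vᵀ, where U and V are p×p orthogonal matrices and Σ is diagonal with nonnegative entries. Then for every p×p orthogonal matrix O, trace(O*M) ≤ trace(Σ), and equality is attained for O = V*Uᵀ. Consequently V*Uᵀ maximizes trace(O*M) over the orthogonal group O(p). -/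
open Matrix Filter Real

/-- Orthogonal Procrustes: if `M = U Σ Vᵀ` is a singular value decomposition of `M`
(`U, V` orthogonal and `Σ = diag(σ)` with `σ ≥ 0`), then `trace (O * M) ≤ trace Σ` for
every orthogonal `O`, with equality attained at `O = V Uᵀ`; hence `V Uᵀ` maximizes
`trace (O * M)` over the orthogonal group. -/
theorem orthogonal_procrustes {p : ℕ} (hp : 0 < p)
    (M U V : Matrix (Fin p) (Fin p) ℝ) (σ : Fin p → ℝ) (hσ : ∀ i, 0 ≤ σ i)
    (hU : Uᵀ * U = 1) (hV : Vᵀ * V = 1)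
    (hM : M = U * Matrix.diagonal σ * Vᵀ) :
    (∀ O : Matrix (Fin p) (Fin p) ℝ, Oᵀ * O = 1 →
      (O * M).trace ≤ (Matrix.diagonal σ).trace) ∧
    (V * Uᵀ * M).trace = (Matrix.diagonal σ).trace := by
  have hV' : V * Vᵀ = 1 := mul_eq_one_comm.mp hV
  have key : ∀ O : Matrix (Fin p) (Fin p) ℝ,
      (O * M).trace = ((Vᵀ * O * U) * Matrix.diagonal σ).trace := by
    intro O
    rw [hM, ← Matrix.mul_assoc, Matrix.trace_mul_comm]
    simp only [Matrix.mul_assoc]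
  constructor
  · intro O hO
    have hW : (Vᵀ * O * U)ᵀ * (Vᵀ * O * U) = 1 := by
      calc (Vᵀ * O * U)ᵀ * (Vᵀ * O * U) = Uᵀ * (Oᵀ * (V * Vᵀ) * O) * U := by
            simp only [Matrix.transpose_mul, Matrix.transpose_transpose, Matrix.mul_assoc]
        _ = 1 := by rw [hV', Matrix.mul_one, hO, Matrix.mul_one, hU]
    rw [key]
    generalize Vᵀ * O * U = W at hW
    simp only [Matrix.trace, Matrix.diag_apply, Matrix.mul_diagonal, Matrix.diagonal_apply_eq]
    refine Finset.sum_le_sum fun i _ => ?_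
    have h1 : ∑ k, W k i * W k i = 1 := by
      have h := congrFun (congrFun hW i) i
      simpa [Matrix.mul_apply] using h
    have h2 : W i i * W i i ≤ 1 := by
      rw [← h1]
      exact Finset.single_le_sum (f := fun k => W k i * W k i)
        (fun k _ => mul_self_nonneg _) (Finset.mem_univ i)
    have h3 : W i i ≤ 1 := by nlinarith
    exact mul_le_of_le_one_left (hσ i) h3
  · rw [key, ← Matrix.mul_assoc, hV, Matrix.one_mul, hU, Matrix.one_mul]
end
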